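/- Let F : ℝ → ℝ be the CDF of a distribution supported on [0,∞): F is continuous and strictly increasing on its support, F(x) = 0 for x ≤ 0, and F(x) → 1 as x → ∞. Suppose F is regular, i.e., the revenue function R(q) = q·F⁻¹(1−q) is concave on (0,1], where F⁻¹(y) = inf{v ≥ 0 : F(v) ≥ y}. Let p* > 0 be a maximizer of p·(1−F(p)) over p ≥ 0 with p*(1−F(p*)) > 0, and let q* = 1−F(p*). Then for every r ≥ 0: min( r·(1−F(r)) / (p*·q*), 1−F(r) ) ≤ 1 − F(p*·q*). -/

import Mathlib

/-!
Let `s = p* q*`, so `s ≤ p*`. A price `r ≥ s` sells with probability at most `1 - F s`, which bounds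
the second entry of the minimum. If `r < s`, then the sale probabilities satisfy
`q* ≤ 1 - F s ≤ 1 - F r`; since the concave revenue function is maximal at `q*`, it is antitone to
the right of `q*`, so `r (1 - F r) ≤ s (1 - F s) = p* q* (1 - F s)`, which bounds the first entry.
-/

open Set

/-- The quantile function `F⁻¹(y) = inf {v ≥ 0 : F v ≥ y}`. -/
noncomputable def quantile (F : ℝ → ℝ) (y : ℝ) : ℝ := sInf {v : ℝ | 0 ≤ v ∧ y ≤ F v}

/-- `F` is the CDF of a distribution supported on `[0,∞)`: continuous, strictly
increasing on `[0,∞)`, zero on `(-∞,0]`, and tending to `1` at `∞`. -/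
structure IsCDFOnNonneg (F : ℝ → ℝ) : Prop where
  cont : Continuous F
  strictMono : StrictMonoOn F (Ici 0)
  zero_of_nonpos : ∀ x ≤ 0, F x = 0
  tendsto_one : Filter.Tendsto F Filter.atTop (nhds 1)

/-- `F` is regular: the revenue function `R(q) = q · F⁻¹(1-q)` is concave on `(0,1]`. -/
def IsRegularCDF (F : ℝ → ℝ) : Prop :=
  ConcaveOn ℝ (Ioc 0 1) (fun q => q * quantile F (1 - q))

lemma quantile_apply {F : ℝ → ℝ} (hF : IsCDFOnNonneg F) {v : ℝ} (hv : 0 ≤ v) :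
    quantile F (F v) = v := by
  have h : {w : ℝ | 0 ≤ w ∧ F v ≤ F w} = Ici v := by
    ext w
    constructor
    · rintro ⟨hw, h⟩
      exact (hF.strictMono.le_iff_le hv hw).1 h
    · intro hw
      have hw0 : 0 ≤ w := le_trans hv hw
      exact ⟨hw0, (hF.strictMono.le_iff_le hv hw0).2 hw⟩
  rw [quantile, h, csInf_Ici]

/-- with `p*` the monopoly price and `q* = 1 - F p*`, for every price
`r ≥ 0`, `min (r·(1-F r)/(p*·q*)) (1-F r) ≤ 1 - F (p*·q*)`. -/
theorem stmt_17 (F : ℝ → ℝ) (hF : IsCDFOnNonneg F) (hreg : IsRegularCDF F)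
    (pstar : ℝ) (hpstar : 0 < pstar)
    (hmax : ∀ p : ℝ, 0 ≤ p → p * (1 - F p) ≤ pstar * (1 - F pstar))
    (hpos : 0 < pstar * (1 - F pstar)) (qstar : ℝ) (hq : qstar = 1 - F pstar) :
    ∀ r ≥ (0 : ℝ),
      min (r * (1 - F r) / (pstar * qstar)) (1 - F r) ≤ 1 - F (pstar * qstar) := by
  intro r hr
  subst hq
  set s := pstar * (1 - F pstar) with hs
  have mono : ∀ {a b : ℝ}, 0 ≤ a → a ≤ b → F a ≤ F b := fun ha hab =>
    hF.strictMono.monotoneOn ha (le_trans ha hab) hab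
  have hF0 : ∀ {v : ℝ}, 0 ≤ v → 0 ≤ F v := fun hv => by
    simpa [hF.zero_of_nonpos 0 le_rfl] using mono le_rfl hv
  rcases le_or_gt s r with h | h
  · exact (min_le_right _ _).trans (by linarith [mono hpos.le h])
  · refine (min_le_left _ _).trans ?_
    have hq0 : 0 < 1 - F pstar := pos_of_mul_pos_right hpos hpstar.le
    have hsp : s ≤ pstar := by nlinarith [hF0 hpstar.le]
    have h1 := mono hpos.le hsp
    have h2 := mono hr h.le
    -- a concave function on `[q*, 1 - F r]` is at least its smaller endpoint value, here at `1 - F r`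
    have hmin := hreg.min_le_of_mem_Icc (x := 1 - F pstar) (y := 1 - F r) (z := 1 - F s)
      ⟨hq0, by linarith [hF0 hpstar.le]⟩ ⟨by linarith, by linarith [hF0 hr]⟩
      ⟨by linarith, by linarith⟩
    simp only [sub_sub_cancel, quantile_apply hF hpstar.le, quantile_apply hF hr,
      quantile_apply hF hpos.le] at hmin
    have hm := hmax r hr
    rw [min_eq_right (by linarith)] at hmin
    rw [div_le_iff₀ hpos]
    linarith
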